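/- For all nonnegative integers n and l, the number f^O_{n,l} of fixed-point-free involutions of {1,…,2n} whose longest increasing subsequence has length at most l equals the 2n-th moment of the trace of a Haar-random l×l real orthogonal matrix: f^O_{n,l} = E_{U∈O(l)} (Tr(U))^{2n}. -/

import Mathlib

open MeasureTheory Matrix

noncomputable section

/-- `lisLE π l` means the longest increasing subsequence of the permutation `π`
has length at most `l`. -/
def lisLE {N : ℕ} (π : Equiv.Perm (Fin N)) (l : ℕ) : Prop :=
  ∀ (k : ℕ) (f : Fin k → Fin N), StrictMono f → StrictMono (fun i => π (f i)) → k ≤ l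

/-- `f^O_{n,l}`: the number of fixed-point-free involutions of `{1,…,2n}` whose
longest increasing subsequence has length at most `l`. -/
def fpfInvCount (n l : ℕ) : ℕ :=
  Nat.card {π : Equiv.Perm (Fin (2 * n)) //
    π * π = 1 ∧ (∀ x, π x ≠ x) ∧ lisLE π l}

instance (l : ℕ) : MeasurableSpace (Matrix.orthogonalGroup (Fin l) ℝ) := borel _
instance (l : ℕ) : BorelSpace (Matrix.orthogonalGroup (Fin l) ℝ) := ⟨rfl⟩

section kronPow

variable {l : ℕ}

/-- The `ι`-th tensor power of a matrix, acting on functions of words `ι → Fin l`. -/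
def kronPow (ι : Type) [Fintype ι] (A : Matrix (Fin l) (Fin l) ℝ) :
    Matrix (ι → Fin l) (ι → Fin l) ℝ :=
  Matrix.of fun v w => ∏ k, A (v k) (w k)

variable {ι : Type} [Fintype ι]

lemma kronPow_apply (A : Matrix (Fin l) (Fin l) ℝ) (v w : ι → Fin l) :
    kronPow ι A v w = ∏ k, A (v k) (w k) := rfl

lemma kronPow_one : kronPow ι (1 : Matrix (Fin l) (Fin l) ℝ) = 1 := by
  ext v w
  simp only [kronPow_apply, Matrix.one_apply, Finset.prod_ite_zero, Finset.prod_const_one,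
    Finset.mem_univ, true_imp_iff, funext_iff]

lemma integrable_kronPow (μ : Measure (Matrix.orthogonalGroup (Fin l) ℝ))
    [IsProbabilityMeasure μ] (v w : ι → Fin l) :
    Integrable (fun U : Matrix.orthogonalGroup (Fin l) ℝ =>
      kronPow ι (U : Matrix _ _ ℝ) v w) μ := by
  refine Integrable.of_bound (C := 1) (Continuous.aestronglyMeasurable ?_) (.of_forall fun U => ?_)
  · simp only [kronPow_apply]
    exact continuous_finsetProd _ fun k _ =>
      (continuous_apply_apply (v k) (w k)).comp continuous_subtype_val
  · rw [kronPow_apply, norm_prod]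
    exact Finset.prod_le_one (fun _ _ => norm_nonneg _) fun k _ =>
      entry_norm_bound_of_unitary (𝕜 := ℝ) U.2 _ _

variable [DecidableEq ι]

lemma kronPow_mul (A B : Matrix (Fin l) (Fin l) ℝ) :
    kronPow ι (A * B) = kronPow ι A * kronPow ι B := by
  ext v w
  simp only [kronPow_apply, Matrix.mul_apply, Finset.prod_univ_sum, Fintype.piFinset_univ,
    Finset.prod_mul_distrib]

lemma trace_kronPow (A : Matrix (Fin l) (Fin l) ℝ) :
    (kronPow ι A).trace = A.trace ^ Fintype.card ι := by
  simp only [Matrix.trace, Matrix.diag_apply, kronPow_apply]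
  rw [← Finset.card_univ, ← Finset.prod_const, Finset.prod_univ_sum, Fintype.piFinset_univ]

/-- The tensors fixed by every orthogonal matrix. -/
def invariantTensors (ι : Type) [Fintype ι] [DecidableEq ι] (l : ℕ) :
    Submodule ℝ ((ι → Fin l) → ℝ) where
  carrier := {f | ∀ U : Matrix.orthogonalGroup (Fin l) ℝ, kronPow ι (U : Matrix _ _ ℝ) *ᵥ f = f}
  add_mem' hf hg U := by rw [Matrix.mulVec_add, hf U, hg U]
  zero_mem' U := Matrix.mulVec_zero _
  smul_mem' c f hf U := by rw [Matrix.mulVec_smul, hf U]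

/-- The averaging projection onto the invariant tensors has trace both their dimension and a
moment of the trace. -/
lemma integral_trace_pow_eq_finrank (μ : Measure (Matrix.orthogonalGroup (Fin l) ℝ))
    [μ.IsHaarMeasure] [IsProbabilityMeasure μ] :
    ∫ U, (Matrix.trace (U : Matrix (Fin l) (Fin l) ℝ)) ^ Fintype.card ι ∂μ =
      Module.finrank ℝ (invariantTensors ι l) := by
  set P : Matrix (ι → Fin l) (ι → Fin l) ℝ :=
    Matrix.of fun v w => ∫ U, kronPow ι (U : Matrix (Fin l) (Fin l) ℝ) v w ∂μ with hP
  have mulVec_P (f : (ι → Fin l) → ℝ) (v : ι → Fin l) :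
      (P *ᵥ f) v = ∫ U, (kronPow ι (U : Matrix (Fin l) (Fin l) ℝ) *ᵥ f) v ∂μ := by
    simp only [Matrix.mulVec, dotProduct, hP, Matrix.of_apply]
    rw [integral_finsetSum _ fun w _ => (integrable_kronPow μ v w).mul_const _]
    simp only [integral_mul_const]
  have hmul (V : Matrix.orthogonalGroup (Fin l) ℝ) : 
      kronPow ι (V : Matrix (Fin l) (Fin l) ℝ) * P = P := by
    ext v w
    calc (kronPow ι (V : Matrix (Fin l) (Fin l) ℝ) * P) v w
        = ∫ U, (kronPow ι ((V * U : Matrix.orthogonalGroup (Fin l) ℝ) : Matrix _ _ ℝ)) v w ∂μ := by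
          simp only [Submonoid.coe_mul, kronPow_mul]
          simp only [Matrix.mul_apply, hP, Matrix.of_apply]
          rw [integral_finsetSum _ fun u _ => (integrable_kronPow μ u w).const_mul _]
          simp only [integral_const_mul]
      _ = P v w := integral_mul_left_eq_self
          (fun U : Matrix.orthogonalGroup (Fin l) ℝ => kronPow ι (U : Matrix _ _ ℝ) v w) V
  have hproj : LinearMap.IsProj (invariantTensors ι l) (Matrix.toLin' P) := by
    constructor
    · intro f U
      rw [Matrix.toLin'_apply, Matrix.mulVec_mulVec, hmul]
    · intro f hf
      ext v
      rw [Matrix.toLin'_apply, mulVec_P]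
      have : ∀ U : Matrix.orthogonalGroup (Fin l) ℝ, (kronPow ι (U : Matrix _ _ ℝ) *ᵥ f) v = f v :=
        fun U => congrFun (hf U) v
      simp [this]
  rw [← hproj.trace, Matrix.trace_toLin'_eq]
  simp only [← trace_kronPow]
  simp only [Matrix.trace, Matrix.diag_apply, hP, Matrix.of_apply]
  rw [integral_finsetSum _ fun v _ => integrable_kronPow μ v v]

end kronPow

section traceless

variable {l : ℕ}

variable {ι : Type} [Fintype ι] [DecidableEq ι]

lemma sum_sum_update (g : (ι → Fin l) → ℝ) (k : ι) :
    ∑ w, ∑ a, g (Function.update w k a) = l * ∑ w, g w := by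
  have h : ∑ p : (ι → Fin l) × Fin l, g (Function.update p.1 k p.2) =
      ∑ p : (ι → Fin l) × Fin l, g p.1 := by
    refine Finset.sum_nbij' (fun p => (Function.update p.1 k p.2, p.1 k))
      (fun p => (Function.update p.1 k p.2, p.1 k)) ?_ ?_ ?_ ?_ ?_ <;> simp
  rw [Fintype.sum_prod_type, Fintype.sum_prod_type] at h
  rw [h, Finset.mul_sum]
  simp

lemma sum_prod_erase_one_mul (g : (ι → Fin l) → ℝ) (w : ι → Fin l) (k : ι) :
    ∑ v, (∏ r ∈ Finset.univ.erase k, (1 : Matrix (Fin l) (Fin l) ℝ) (w r) (v r)) * g v =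
      ∑ a, g (Function.update w k a) := by
  have hinj : Function.Injective (fun a => Function.update w k a) := Function.update_injective w k
  rw [← Finset.sum_image (f := g) hinj.injOn]
  symm
  rw [← Finset.sum_subset (Finset.subset_univ (Finset.univ.image fun a => Function.update w k a))]
  · refine Finset.sum_congr rfl fun v hv => ?_
    obtain ⟨a, -, rfl⟩ := Finset.mem_image.1 hv
    rw [Finset.prod_eq_one, one_mul]
    intro r hr
    rw [Function.update_of_ne (Finset.ne_of_mem_erase hr), Matrix.one_apply_eq]
  · intro v _ hv
    have : ∃ r ∈ Finset.univ.erase k, w r ≠ v r := by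
      by_contra! H
      refine hv (Finset.mem_image.2 ⟨v k, Finset.mem_univ _, funext fun r => ?_⟩)
      by_cases hr : r = k
      · subst hr; simp
      · simp [hr, H r (by simp [hr])]
    obtain ⟨r, hr, hne⟩ := this
    have h0 : (1 : Matrix (Fin l) (Fin l) ℝ) (w r) (v r) = 0 := Matrix.one_apply_ne hne
    rw [Finset.prod_eq_zero hr h0, zero_mul]

/-- The action of the elementary matrix `E i j` as a derivation on tensors. -/
def elemDeriv (i j : Fin l) (f : (ι → Fin l) → ℝ) (w : ι → Fin l) : ℝ :=
  ∑ k, if w k = i then f (Function.update w k j) else 0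

/-- The rotation by the angle `θ` in the plane of the coordinates `i` and `j`. -/
def planeRotation (i j : Fin l) (θ : ℝ) : Matrix (Fin l) (Fin l) ℝ :=
  1 + (Real.cos θ - 1) • (Matrix.single i i 1 + Matrix.single j j 1) +
    Real.sin θ • (Matrix.single i j 1 - Matrix.single j i 1)

lemma planeRotation_mem {i j : Fin l} (hij : i ≠ j) (θ : ℝ) :
    planeRotation i j θ ∈ Matrix.orthogonalGroup (Fin l) ℝ := by
  rw [Matrix.mem_orthogonalGroup_iff]
  set D : Matrix (Fin l) (Fin l) ℝ := Matrix.single i i 1 + Matrix.single j j 1 with hD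
  set X : Matrix (Fin l) (Fin l) ℝ := Matrix.single i j 1 - Matrix.single j i 1 with hX
  have hDt : Dᵀ = D := by simp [hD, Matrix.transpose_single]
  have hXt : Xᵀ = -X := by simp [hX, Matrix.transpose_single]
  have hDD : D * D = D := by simp [hD, mul_add, add_mul, hij, hij.symm]
  have hDX : D * X = X := by simp [hD, hX, mul_sub, add_mul, hij, hij.symm]
  have hXD : X * D = X := by simp [hD, hX, mul_add, sub_mul, hij, hij.symm]; abel
  have hXX : X * X = -D := by simp [hD, hX, mul_sub, sub_mul, hij, hij.symm]; abel
  have hrot : planeRotation i j θ = 1 + (Real.cos θ - 1) • D + Real.sin θ • X := rfl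
  have hs : Real.sin θ * Real.sin θ = 1 - Real.cos θ * Real.cos θ := by
    linarith [Real.sin_sq_add_cos_sq θ, sq (Real.sin θ), sq (Real.cos θ)]
  rw [hrot]
  simp only [Matrix.transpose_add, Matrix.transpose_one, Matrix.transpose_smul, hDt, hXt, mul_add,
    add_mul, Matrix.smul_mul, Matrix.mul_smul, hDD, hDX, hXD, hXX, one_mul, mul_one, smul_neg,
    mul_neg, smul_smul, hs]
  module

lemma hasDerivAt_planeRotation (i j a b : Fin l) :
    HasDerivAt (fun θ => planeRotation i j θ a b)
      ((Matrix.single i j 1 - Matrix.single j i 1 : Matrix (Fin l) (Fin l) ℝ) a b) 0 := by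
  have h := ((((Real.hasDerivAt_cos 0).sub_const 1).mul_const
    ((Matrix.single i i 1 + Matrix.single j j 1 : Matrix (Fin l) (Fin l) ℝ) a b)).const_add
      ((1 : Matrix (Fin l) (Fin l) ℝ) a b)).add ((Real.hasDerivAt_sin 0).mul_const
    ((Matrix.single i j 1 - Matrix.single j i 1 : Matrix (Fin l) (Fin l) ℝ) a b))
  exact HasDerivAt.congr_deriv h (by simp)

lemma planeRotation_zero (i j : Fin l) : planeRotation i j 0 = 1 := by
  simp [planeRotation]

lemma elemDeriv_symm_of_invariant {f : (ι → Fin l) → ℝ} (hf : f ∈ invariantTensors ι l)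
    (i j : Fin l) : elemDeriv i j f = elemDeriv j i f := by
  by_cases hij : i = j
  · rw [hij]
  ext w
  set X : Matrix (Fin l) (Fin l) ℝ := Matrix.single i j 1 - Matrix.single j i 1 with hX
  have hd : HasDerivAt (fun θ => ∑ v, (∏ k, planeRotation i j θ (w k) (v k)) * f v)
      (∑ v, (∑ k, (∏ r ∈ Finset.univ.erase k, planeRotation i j 0 (w r) (v r)) •
        X (w k) (v k)) * f v) 0 :=
    HasDerivAt.fun_sum fun v _ => (HasDerivAt.fun_finsetProd fun k _ =>
      hasDerivAt_planeRotation i j (w k) (v k)).mul_const (f v)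
  have hconst : (fun θ => ∑ v, (∏ k, planeRotation i j θ (w k) (v k)) * f v) = fun _ => f w :=
    funext fun θ => congrFun (hf ⟨_, planeRotation_mem hij θ⟩) w
  rw [hconst] at hd
  have h0 := hd.unique (hasDerivAt_const (0 : ℝ) (f w))
  simp only [planeRotation_zero, smul_eq_mul, Finset.sum_mul, mul_assoc] at h0
  rw [Finset.sum_comm] at h0
  simp only [sum_prod_erase_one_mul (fun v => X (w _) (v _) * f v), Function.update_self] at h0
  rw [← sub_eq_zero, ← h0, elemDeriv, elemDeriv, ← Finset.sum_sub_distrib]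
  refine Finset.sum_congr rfl fun k _ => ?_
  simp only [hX, Matrix.sub_apply, Matrix.single_apply, sub_mul, ite_mul, one_mul, zero_mul,
    Finset.sum_sub_distrib, ite_and]
  simp [eq_comm]

lemma even_card_of_invariant {f : (ι → Fin l) → ℝ} (hf : f ∈ invariantTensors ι l)
    {w : ι → Fin l} (hw : f w ≠ 0) (i : Fin l) :
    Even (Finset.univ.filter fun k => w k = i).card := by
  set d : Fin l → ℝ := fun a => if a = i then -1 else 1 with hd
  have hmem : Matrix.diagonal d ∈ Matrix.orthogonalGroup (Fin l) ℝ := by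
    rw [Matrix.mem_orthogonalGroup_iff, Matrix.diagonal_transpose,
      Matrix.diagonal_mul_diagonal, ← Matrix.diagonal_one]
    congr 1
    ext a
    by_cases h : a = i <;> simp [hd, h]
  have h := congrFun (hf ⟨_, hmem⟩) w
  have hk : kronPow ι (Matrix.diagonal d) = Matrix.diagonal fun w => ∏ k, d (w k) := by
    ext v u
    rw [kronPow_apply]
    by_cases hvu : v = u
    · subst hvu; simp
    · obtain ⟨k, hk⟩ := Function.ne_iff.1 hvu
      have h0 : Matrix.diagonal d (v k) (u k) = 0 := Matrix.diagonal_apply_ne _ hk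
      rw [Matrix.diagonal_apply_ne _ hvu, Finset.prod_eq_zero (Finset.mem_univ k) h0]
  simp only [hk, Matrix.mulVec_diagonal] at h
  have h1 : ∏ k, d (w k) = (-1) ^ (Finset.univ.filter fun k => w k = i).card := by
    simp [hd, Finset.prod_ite]
  rw [h1] at h
  have h2 : (-1 : ℝ) ^ (Finset.univ.filter fun k => w k = i).card = 1 :=
    mul_right_cancel₀ hw (by rw [h, one_mul])
  rwa [neg_one_pow_eq_one_iff_even (by norm_num)] at h2

/-- An invariant tensor of positive degree, all of whose contractions vanish, is zero. -/
lemma eq_zero_of_traceless [Nonempty ι] {f : (ι → Fin l) → ℝ} (hf : f ∈ invariantTensors ι l)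
    (htr : ∀ k r, k ≠ r → ∀ w, ∑ a, f (Function.update (Function.update w k a) r a) = 0) :
    f = 0 := by
  have hoff (k r : ι) (hkr : k ≠ r) :
      ∑ w, f (Function.update w k (w r)) * f (Function.update w r (w k)) = 0 := by
    have h := sum_sum_update
      (fun w => f (Function.update w k (w r)) * f (Function.update w r (w k))) k
    have h0 (w : ι → Fin l) : ∑ a, f (Function.update (Function.update w k a) k
        (Function.update w k a r)) * f (Function.update (Function.update w k a) r
        (Function.update w k a k)) = 0 := by
      simp only [Function.update_idem, Function.update_of_ne hkr.symm, Function.update_self]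
      rw [← Finset.mul_sum, htr k r hkr, mul_zero]
    simp only [h0, Finset.sum_const_zero] at h
    rcases mul_eq_zero.1 h.symm with hl | h
    · have : l = 0 := by exact_mod_cast hl
      subst this
      exact Finset.sum_eq_zero fun w _ => (w k).elim0
    · exact h
  have htotal : ∑ i, ∑ j, ∑ w, elemDeriv i j f w ^ 2 = Fintype.card ι * ∑ w, f w ^ 2 := by
    have hpt (w : ι → Fin l) : ∑ i, ∑ j, elemDeriv i j f w * elemDeriv j i f w =
        ∑ k, ∑ r, f (Function.update w k (w r)) * f (Function.update w r (w k)) := by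
      simp only [elemDeriv, Finset.sum_mul_sum]
      rw [Finset.sum_congr rfl fun i _ => Finset.sum_comm, Finset.sum_comm]
      refine Finset.sum_congr rfl fun k _ => ?_
      rw [Finset.sum_congr rfl fun i _ => Finset.sum_comm, Finset.sum_comm]
      refine Finset.sum_congr rfl fun r _ => ?_
      simp
    calc ∑ i, ∑ j, ∑ w, elemDeriv i j f w ^ 2
        = ∑ w, ∑ i, ∑ j, elemDeriv i j f w * elemDeriv j i f w := by
          rw [Finset.sum_congr rfl fun i _ => Finset.sum_comm, Finset.sum_comm]
          refine Finset.sum_congr rfl fun w _ => Finset.sum_congr rfl fun i _ =>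
            Finset.sum_congr rfl fun j _ => ?_
          rw [elemDeriv_symm_of_invariant hf j i, sq]
      _ = ∑ k, ∑ r, ∑ w, f (Function.update w k (w r)) * f (Function.update w r (w k)) := by
          simp only [hpt]
          rw [Finset.sum_comm]
          exact Finset.sum_congr rfl fun k _ => Finset.sum_comm
      _ = ∑ k : ι, ∑ w, f w ^ 2 := by
          refine Finset.sum_congr rfl fun k _ => ?_
          rw [Finset.sum_eq_single k (fun r _ hr => hoff k r hr.symm) (by simp)]
          simp [sq]
      _ = _ := by simp
  have hdiag (w : ι → Fin l) :
      2 * (Fintype.card ι * f w ^ 2) ≤ ∑ i, elemDeriv i i f w ^ 2 := by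
    by_cases hw : f w = 0
    · simpa [hw] using Finset.sum_nonneg fun i _ => sq_nonneg (elemDeriv i i f w)
    set n : Fin l → ℕ := fun i => (Finset.univ.filter fun k => w k = i).card with hn
    have hE (i : Fin l) : elemDeriv i i f w = n i * f w := by
      have : ∀ k, (if w k = i then f (Function.update w k i) else 0) =
          if w k = i then f w else 0 := by
        intro k
        split_ifs with h
        · rw [← h, Function.update_eq_self]
        · rfl
      simp [elemDeriv, this, hn, Finset.sum_ite]
    have hcard : ∑ i, (n i : ℝ) = Fintype.card ι := by
      rw [← Nat.cast_sum]
      congr 1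
      rw [← Finset.card_univ, Finset.card_eq_sum_card_fiberwise (f := w) (t := Finset.univ)
        (fun _ _ => by simp)]
    have hle (i : Fin l) : 2 * (n i : ℝ) ≤ (n i : ℝ) ^ 2 := by
      obtain ⟨c, hc⟩ := even_card_of_invariant hf hw i
      have hc' : n i = c + c := hc
      rw [hc']
      have : c ≤ c * c := Nat.le_mul_self c
      have : (c : ℝ) ≤ c * c := by exact_mod_cast this
      push_cast
      nlinarith
    calc 2 * (Fintype.card ι * f w ^ 2) = ∑ i, 2 * (n i : ℝ) * f w ^ 2 := by
          rw [← Finset.sum_mul, ← Finset.mul_sum, hcard]; ring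
      _ ≤ ∑ i, elemDeriv i i f w ^ 2 := Finset.sum_le_sum fun i _ => by
          rw [hE, mul_pow]
          exact mul_le_mul_of_nonneg_right (hle i) (sq_nonneg _)
  have hlow : 2 * (Fintype.card ι * ∑ w, f w ^ 2) ≤ ∑ i, ∑ j, ∑ w, elemDeriv i j f w ^ 2 :=
    calc 2 * (Fintype.card ι * ∑ w, f w ^ 2) = ∑ w, 2 * (Fintype.card ι * f w ^ 2) := by
          simp only [Finset.mul_sum]
      _ ≤ ∑ w, ∑ i, elemDeriv i i f w ^ 2 := Finset.sum_le_sum fun w _ => hdiag w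
      _ = ∑ i, ∑ w, elemDeriv i i f w ^ 2 := Finset.sum_comm
      _ ≤ _ := Finset.sum_le_sum fun i _ =>
          Finset.single_le_sum (f := fun j => ∑ w, elemDeriv i j f w ^ 2)
            (fun j _ => Finset.sum_nonneg fun w _ => sq_nonneg _) (Finset.mem_univ i)
  have hpos : (0 : ℝ) < Fintype.card ι := by exact_mod_cast Fintype.card_pos
  have hnn : 0 ≤ ∑ w, f w ^ 2 := Finset.sum_nonneg fun w _ => sq_nonneg _
  have hzero : ∑ w, f w ^ 2 = 0 := by nlinarith
  ext w
  exact pow_eq_zero_iff (two_ne_zero) |>.1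
    ((Finset.sum_eq_zero_iff_of_nonneg fun w _ => sq_nonneg _).1 hzero w (Finset.mem_univ w))

end traceless

section pairing

variable {l : ℕ}

/-- A fixed-point-free involution, i.e. a perfect matching of `ι`. -/
def IsPairing {ι : Type} (π : Equiv.Perm ι) : Prop :=
  π * π = 1 ∧ ∀ x, π x ≠ x

lemma IsPairing.apply_apply {ι : Type} {π : Equiv.Perm ι} (h : IsPairing π) (x : ι) :
    π (π x) = x := by
  rw [← Equiv.Perm.mul_apply, h.1, Equiv.Perm.one_apply]

lemma IsPairing.permCongr {ι κ : Type} {π : Equiv.Perm ι} (h : IsPairing π) (e : ι ≃ κ) :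
    IsPairing (e.permCongr π) := by
  refine ⟨?_, fun x hx => h.2 (e.symm x) ?_⟩
  · ext x
    simp [Equiv.permCongr_apply, h.apply_apply]
  · rw [Equiv.permCongr_apply] at hx
    rw [← e.symm_apply_apply (π _), hx]

lemma IsPairing.sumCongr_boolNot {ι : Type} {π : Equiv.Perm ι} (h : IsPairing π) :
    IsPairing (Equiv.sumCongr π Equiv.boolNot) := by
  refine ⟨?_, ?_⟩
  · ext (x | x) <;> simp [h.apply_apply]
  · rintro (x | x)
    · simp [h.2 x]
    · simp

/-- The tensor whose entry at a word is `1` if paired letters agree and `0` otherwise. -/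
def pairingTensor {ι : Type} [Fintype ι] (l : ℕ) (π : Equiv.Perm ι) (w : ι → Fin l) : ℝ :=
  if ∀ x, w (π x) = w x then 1 else 0

lemma pairingTensor_permCongr {ι κ : Type} [Fintype ι] [Fintype κ] (e : ι ≃ κ) (π : Equiv.Perm ι)
    (w : κ → Fin l) :
    pairingTensor l (e.permCongr π) w = pairingTensor l π (w ∘ e) := by
  unfold pairingTensor
  congr 1
  rw [← e.forall_congr_right]
  simp [Equiv.permCongr_apply]

variable {ι κ : Type} [Fintype ι] [DecidableEq ι] [Fintype κ] [DecidableEq κ]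

lemma mem_invariantTensors_iff {f : (ι → Fin l) → ℝ} :
    f ∈ invariantTensors ι l ↔ ∀ U : Matrix.orthogonalGroup (Fin l) ℝ, ∀ w,
      ∑ v, (∏ k, (U : Matrix (Fin l) (Fin l) ℝ) (w k) (v k)) * f v = f w :=
  ⟨fun h U w => congrFun (h U) w, fun h U => funext fun w => h U w⟩

lemma reindex_mem_invariantTensors {f : (ι → Fin l) → ℝ} (hf : f ∈ invariantTensors ι l)
    (e : κ ≃ ι) : (fun w : κ → Fin l => f (w ∘ e.symm)) ∈ invariantTensors κ l := by
  rw [mem_invariantTensors_iff] at hf ⊢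
  intro U w
  rw [← hf U (w ∘ e.symm), ← (e.arrowCongr (Equiv.refl (Fin l))).sum_comp]
  refine Finset.sum_congr rfl fun v _ => ?_
  rw [← e.prod_comp]
  simp [Equiv.arrowCongr]

lemma sum_sumArrow {α : Type} [Fintype α] (g : (ι ⊕ κ → α) → ℝ) :
    ∑ v, g v = ∑ a : ι → α, ∑ b : κ → α, g (Sum.elim a b) := by
  rw [← (Equiv.sumArrowEquivProdArrow ι κ α).symm.sum_comp, Fintype.sum_prod_type]
  rfl

lemma orthogonal_sum_row (U : Matrix.orthogonalGroup (Fin l) ℝ) (b c : Fin l) :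
    ∑ a, (U : Matrix (Fin l) (Fin l) ℝ) a b * (U : Matrix (Fin l) (Fin l) ℝ) a c =
      if b = c then 1 else 0 := by
  have h := congrFun (congrFun ((Matrix.mem_orthogonalGroup_iff' (Fin l) ℝ).1 U.2) b) c
  rw [← Matrix.one_apply, ← h, Matrix.mul_apply]
  rfl

lemma diagonalTensor_mem_invariantTensors :
    (fun w : ι ⊕ ι → Fin l => if w ∘ Sum.inl = w ∘ Sum.inr then (1 : ℝ) else 0) ∈
      invariantTensors (ι ⊕ ι) l := by
  rw [mem_invariantTensors_iff]
  intro U w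
  have hU : kronPow ι (U : Matrix (Fin l) (Fin l) ℝ) *
      (kronPow ι (U : Matrix (Fin l) (Fin l) ℝ))ᵀ = 1 := by
    have ht : (kronPow ι (U : Matrix (Fin l) (Fin l) ℝ))ᵀ =
      kronPow ι (U : Matrix (Fin l) (Fin l) ℝ)ᵀ := rfl
    rw [ht, ← kronPow_mul, ← kronPow_one]
    exact congrArg _ ((Matrix.mem_orthogonalGroup_iff (Fin l) ℝ).1 U.2)
  rw [sum_sumArrow]
  have h := congrFun (congrFun hU (w ∘ Sum.inl)) (w ∘ Sum.inr)
  rw [Matrix.one_apply, Matrix.mul_apply] at h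
  rw [← h]
  refine Finset.sum_congr rfl fun a _ => ?_
  rw [Finset.sum_eq_single a]
  · simp [kronPow_apply]
  · intro b _ hb
    simp [hb.symm]
  · simp

lemma pairingTensor_mem_invariantTensors {m : ℕ} {π : Equiv.Perm (Fin m)} (hπ : IsPairing π) :
    pairingTensor l π ∈ invariantTensors (Fin m) l := by
  let g : {x // x < π x} ⊕ {x // x < π x} → Fin m := Sum.elim (fun x => x) (fun x => π x)
  have hg : Function.Bijective g := by
    constructor
    · rintro (⟨x, hx⟩ | ⟨x, hx⟩) (⟨y, hy⟩ | ⟨y, hy⟩) h <;>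
        simp only [g, Sum.elim_inl, Sum.elim_inr] at h
      · subst h; rfl
      · rw [h, hπ.apply_apply] at hx
        exact absurd hx hy.asymm
      · rw [← h, hπ.apply_apply] at hy
        exact absurd hx hy.asymm
      · have := π.injective h
        subst this; rfl
    · intro x
      rcases lt_or_gt_of_ne (hπ.2 x) with h | h
      · exact ⟨Sum.inr ⟨π x, by rwa [hπ.apply_apply]⟩, hπ.apply_apply x⟩
      · exact ⟨Sum.inl ⟨x, h⟩, rfl⟩
  let e := (Equiv.ofBijective g hg).symm
  convert reindex_mem_invariantTensors
    (diagonalTensor_mem_invariantTensors (ι := {x // x < π x}) (l := l)) e using 2 with w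
  unfold pairingTensor
  congr 1
  apply propext
  constructor
  · intro h
    ext1 x
    exact (h x).symm
  · intro h x
    obtain ⟨y, rfl⟩ := hg.2 x
    rcases y with y | y
    · exact (congrFun h y).symm
    · simp only [g, Sum.elim_inr, hπ.apply_apply]
      exact congrFun h y

/-- Contraction of the last two tensor factors. -/
def contraction (f : (ι ⊕ Bool → Fin l) → ℝ) (w : ι → Fin l) : ℝ :=
  ∑ a, f (Sum.elim w fun _ => a)

lemma sum_ite_boolArrow (g : (Bool → Fin l) → ℝ) :
    ∑ b : Bool → Fin l, (if b true = b false then g b else 0) = ∑ a, g fun _ => a := by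
  rw [← (Equiv.boolArrowEquivProd (Fin l)).symm.sum_comp, Fintype.sum_prod_type]
  refine Finset.sum_congr rfl fun a _ => ?_
  rw [Finset.sum_eq_single a]
  · refine (if_pos rfl).trans (congrArg g (funext fun x => ?_))
    cases x <;> rfl
  · exact fun b _ hb => if_neg hb
  · simp

lemma contraction_mem_invariantTensors {f : (ι ⊕ Bool → Fin l) → ℝ}
    (hf : f ∈ invariantTensors (ι ⊕ Bool) l) : contraction f ∈ invariantTensors ι l := by
  rw [mem_invariantTensors_iff] at hf ⊢
  intro U w
  symm
  calc contraction f w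
      = ∑ a, ∑ v : ι → Fin l, ∑ b : Bool → Fin l,
          (∏ k, (U : Matrix (Fin l) (Fin l) ℝ) (w k) (v k)) *
          (((U : Matrix (Fin l) (Fin l) ℝ) a (b true) *
            (U : Matrix (Fin l) (Fin l) ℝ) a (b false)) * f (Sum.elim v b)) := by
        refine Finset.sum_congr rfl fun a _ => ?_
        rw [← hf U, sum_sumArrow]
        refine Finset.sum_congr rfl fun v _ => Finset.sum_congr rfl fun b _ => ?_
        rw [Fintype.prod_sum_type]
        simp [mul_assoc]
    _ = ∑ v : ι → Fin l, (∏ k, (U : Matrix (Fin l) (Fin l) ℝ) (w k) (v k)) *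
          ∑ b : Bool → Fin l, if b true = b false then f (Sum.elim v b) else 0 := by
        rw [Finset.sum_comm]
        refine Finset.sum_congr rfl fun v _ => ?_
        rw [Finset.sum_comm, Finset.mul_sum]
        refine Finset.sum_congr rfl fun b _ => ?_
        rw [← Finset.mul_sum, ← Finset.sum_mul, orthogonal_sum_row, ite_mul, one_mul, zero_mul]
    _ = _ := by
        refine Finset.sum_congr rfl fun v _ => ?_
        rw [sum_ite_boolArrow fun b => f (Sum.elim v b)]
        rfl

lemma sum_pairingTensor_mul_contraction (π : Equiv.Perm ι) (f : (ι ⊕ Bool → Fin l) → ℝ) :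
    ∑ w, pairingTensor l π w * contraction f w =
      ∑ v, pairingTensor l (Equiv.sumCongr π Equiv.boolNot) v * f v := by
  rw [sum_sumArrow]
  refine Finset.sum_congr rfl fun w _ => ?_
  rw [contraction, ← sum_ite_boolArrow fun b => f (Sum.elim w b), Finset.mul_sum]
  refine Finset.sum_congr rfl fun b _ => ?_
  have : (∀ x, Sum.elim w b (Equiv.sumCongr π Equiv.boolNot x) = Sum.elim w b x) ↔
      (∀ x, w (π x) = w x) ∧ b true = b false := by
    simp only [Sum.forall, Equiv.sumCongr_apply, Sum.map_inl, Sum.map_inr, Sum.elim_inl,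
      Sum.elim_inr, Bool.forall_bool, Equiv.boolNot_apply, Bool.not_false, Bool.not_true]
    tauto
  simp only [pairingTensor, this]
  by_cases h1 : ∀ x, w (π x) = w x <;> by_cases h2 : b true = b false <;> simp [h1, h2]

lemma exists_sumBool_equiv {m : ℕ} {k r : Fin (m + 2)} (hkr : k ≠ r) :
    ∃ e : Fin m ⊕ Bool ≃ Fin (m + 2), e (Sum.inr true) = k ∧ e (Sum.inr false) = r := by
  let e₀ : Fin m ⊕ Bool ≃ Fin (m + 2) :=
    (Equiv.sumCongr (Equiv.refl _) finTwoEquiv.symm).trans finSumFinEquiv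
  let e₁ := e₀.trans (Equiv.swap (e₀ (Sum.inr true)) k)
  have h₁ : e₁ (Sum.inr true) = k := by simp [e₁]
  refine ⟨e₁.trans (Equiv.swap (e₁ (Sum.inr false)) r), ?_, by simp⟩
  rw [Equiv.trans_apply, h₁]
  refine Equiv.swap_apply_of_ne_of_ne (fun h => ?_) hkr
  rw [← h₁] at h
  simpa using e₁.injective h

/-- An invariant tensor orthogonal to all pairing tensors vanishes. -/
lemma eq_zero_of_orthogonal_pairingTensor : ∀ (m : ℕ) (f : (Fin m → Fin l) → ℝ),
    f ∈ invariantTensors (Fin m) l →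
    (∀ π : Equiv.Perm (Fin m), IsPairing π → ∑ w, pairingTensor l π w * f w = 0) → f = 0
  | 0, f, _, horth => by
    have h := horth 1 ⟨one_mul 1, fun x => x.elim0⟩
    ext w
    rw [Fintype.sum_unique] at h
    simpa [pairingTensor, Subsingleton.elim w default] using h
  | 1, f, hf, _ => eq_zero_of_traceless hf fun k r hkr => absurd (Subsingleton.elim k r) hkr
  | m + 2, f, hf, horth => by
    refine eq_zero_of_traceless hf fun k r hkr w => ?_
    obtain ⟨e, hk, hr⟩ := exists_sumBool_equiv hkr
    have hzero := eq_zero_of_orthogonal_pairingTensor m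
      (contraction fun v : Fin m ⊕ Bool → Fin l => f (v ∘ e.symm))
      (contraction_mem_invariantTensors (reindex_mem_invariantTensors hf e)) fun π hπ => by
        rw [sum_pairingTensor_mul_contraction, ← horth _ (hπ.sumCongr_boolNot.permCongr e),
          ← (e.arrowCongr (Equiv.refl (Fin l))).sum_comp]
        refine Finset.sum_congr rfl fun v _ => ?_
        rw [pairingTensor_permCongr]
        simp [Equiv.arrowCongr, Function.comp_assoc]
    refine Eq.trans ?_ (congrFun hzero (w ∘ e ∘ Sum.inl))
    refine Finset.sum_congr rfl fun a _ => congrArg f (funext fun x => ?_)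
    obtain ⟨y, rfl⟩ := e.surjective x
    subst hk hr
    rcases y with y | y | y
    all_goals simp

lemma le_of_forall_orthogonal_eq_zero {α : Type} [Fintype α] {S T : Submodule ℝ (α → ℝ)}
    (hST : S ≤ T) (h : ∀ f ∈ T, (∀ g ∈ S, ∑ a, g a * f a = 0) → f = 0) : T ≤ S := by
  let e := (WithLp.linearEquiv 2 ℝ (α → ℝ)).symm
  let S' : Submodule ℝ (EuclideanSpace ℝ α) := S.map e.toLinearMap
  let T' : Submodule ℝ (EuclideanSpace ℝ α) := T.map e.toLinearMap
  have hST' : S' ≤ T' := Submodule.map_mono hST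
  have hbot : S'ᗮ ⊓ T' = ⊥ := by
    rw [eq_bot_iff]
    rintro _ ⟨hx, f, hf, rfl⟩
    have : f = 0 := h f hf fun g hg => by
      have := hx (e g) ⟨g, hg, rfl⟩
      simpa [e, PiLp.inner_apply, mul_comm] using this
    simp [this]
  have heq := Submodule.sup_orthogonal_inf_of_hasOrthogonalProjection hST'
  rw [hbot, sup_bot_eq] at heq
  intro f hf
  have : e f ∈ S' := heq ▸ (⟨f, hf, rfl⟩ : e f ∈ T')
  obtain ⟨g, hg, hgf⟩ := this
  rwa [← e.injective hgf]

/-- The first fundamental theorem of invariant theory for the orthogonal group. -/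
lemma invariantTensors_eq_span (m l : ℕ) :
    invariantTensors (Fin m) l = Submodule.span ℝ (pairingTensor l '' {π | IsPairing π}) := by
  have hle : Submodule.span ℝ (pairingTensor l '' {π | IsPairing π}) ≤
      invariantTensors (Fin m) l :=
    Submodule.span_le.2 (Set.image_subset_iff.2 fun π hπ => pairingTensor_mem_invariantTensors hπ)
  refine le_antisymm (le_of_forall_orthogonal_eq_zero hle fun f hf horth => ?_) hle
  exact eq_zero_of_orthogonal_pairingTensor m f hf fun π hπ =>
    horth _ (Submodule.subset_span ⟨π, hπ, rfl⟩)

end pairing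

section basis

variable {l : ℕ}

/-- Antisymmetrizing a tensor over `Fin l` in more than `l` positions gives zero. -/
lemma sum_sign_mul_pairingTensor_eq_zero {m d : ℕ} (hd : l < d) (J : Fin d ↪ Fin m)
    (π : Equiv.Perm (Fin m)) :
    ∑ σ : Equiv.Perm (Fin d), ((Equiv.Perm.sign σ : ℤ) : ℝ) •
      pairingTensor l ((σ.viaEmbedding J).permCongr π) = 0 := by
  ext w
  simp only [Finset.sum_apply, Pi.smul_apply, smul_eq_mul, pairingTensor_permCongr, Pi.zero_apply]
  obtain ⟨a, b, hab, hw⟩ := Fintype.exists_ne_map_eq_of_card_lt (fun a => w (J a)) (by simpa)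
  have hinv (σ : Equiv.Perm (Fin d)) :
      w ∘ (Equiv.swap a b * σ).viaEmbedding J = w ∘ σ.viaEmbedding J := by
    ext1 x
    by_cases hx : x ∈ Set.range J
    · obtain ⟨c, rfl⟩ := hx
      simp only [Function.comp_apply, Equiv.Perm.viaEmbedding_apply, Equiv.Perm.mul_apply]
      rw [Equiv.swap_apply_def]
      split_ifs with h1 h2
      · rw [h1]; exact hw.symm
      · rw [h2]; exact hw
      · rfl
    · simp only [Function.comp_apply, Equiv.Perm.viaEmbedding_apply_of_notMem _ _ _ hx]
  refine Finset.sum_involution (fun σ _ => Equiv.swap a b * σ) (fun σ _ => ?_) (fun σ _ _ => ?_)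
    (fun _ _ => Finset.mem_univ _) (fun σ _ => ?_)
  · rw [hinv, Equiv.Perm.sign_mul, Equiv.Perm.sign_swap hab]
    simp
  · rw [Ne, mul_eq_right, Equiv.swap_eq_one_iff]
    exact hab
  · rw [← mul_assoc, Equiv.swap_mul_self, one_mul]

lemma lt_of_fixes_lt {d : ℕ} {σ : Equiv.Perm (Fin d)} {a : Fin d} (hne : σ a ≠ a)
    (h : ∀ b < a, σ b = b) : a < σ a := by
  refine lt_of_le_of_ne (le_of_not_gt fun hlt => ?_) hne.symm
  exact hne (σ.injective (h _ hlt))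

/-- Permuting the values of an increasing subsequence of a pairing makes it lexicographically
larger. -/
lemma lt_permCongr_viaEmbedding {m d : ℕ} {π : Equiv.Perm (Fin m)} (hπ : IsPairing π)
    {f : Fin d → Fin m} (hf : StrictMono f) {J : Fin d ↪ Fin m} (hJ : StrictMono J)
    (hJf : ∀ a, J a = π (f a)) {σ : Equiv.Perm (Fin d)} (hσ : σ ≠ 1) :
    toLex ⇑π < toLex ⇑((σ.viaEmbedding J).permCongr π) := by
  have hfJ (a : Fin d) : π (J a) = f a := by rw [hJf, hπ.apply_apply]
  have hdisj (a : Fin d) : f a ∉ Set.range J := by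
    rintro ⟨b, hb⟩
    have hb' : J a = f b := by rw [hJf, ← hb, hfJ]
    rcases lt_trichotomy a b with h | h | h
    · have h1 := hf h
      have h2 := hJ h
      rw [hb', hb] at h2
      exact h1.asymm h2
    · subst h
      exact hπ.2 (f a) (by rw [← hJf, hb'])
    · have h1 := hf h
      have h2 := hJ h
      rw [hb', hb] at h2
      exact h1.asymm h2
  set τ := σ.viaEmbedding J with hτ
  have τJ (a : Fin d) : τ (J a) = J (σ a) := Equiv.Perm.viaEmbedding_apply _ _ _
  have τfix (x : Fin m) (hx : x ∉ Set.range J) : τ x = x :=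
    Equiv.Perm.viaEmbedding_apply_of_notMem _ _ _ hx
  have τsymm_fix (x : Fin m) (hx : x ∉ Set.range J) : τ.symm x = x := by
    rw [Equiv.symm_apply_eq, τfix x hx]
  have τsymm_J (a : Fin d) : τ.symm (J a) = J (σ.symm a) := by
    rw [Equiv.symm_apply_eq, τJ, Equiv.apply_symm_apply]
  have at_f (a : Fin d) : τ.permCongr π (f a) = J (σ a) := by
    rw [Equiv.permCongr_apply, τsymm_fix _ (hdisj a), ← hJf, τJ]
  have at_J (a : Fin d) : τ.permCongr π (J a) = f (σ.symm a) := by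
    rw [Equiv.permCongr_apply, τsymm_J, hfJ, τfix _ (hdisj _)]
  have hne : ∃ p, π p ≠ τ.permCongr π p := by
    obtain ⟨a, ha⟩ : ∃ a, σ a ≠ a := by
      by_contra! h
      exact hσ (Equiv.ext h)
    refine ⟨f a, ?_⟩
    rw [at_f, ← hJf]
    exact fun h => ha (J.injective h).symm
  obtain ⟨p, hp, hmin⟩ := WellFounded.has_min (wellFounded_lt (α := Fin m))
    {p | π p ≠ τ.permCongr π p} hne
  have hbefore : ∀ q < p, π q = τ.permCongr π q := fun q hq => by
    by_contra h
    exact hmin q h hq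
  refine ⟨p, hbefore, lt_of_le_of_ne (le_of_not_gt fun hlt => ?_) hp⟩
  change τ.permCongr π p < π p at hlt
  by_cases h1 : p ∈ Set.range J
  · obtain ⟨a, rfl⟩ := h1
    have hne' : σ.symm a ≠ a := fun h => hp (by rw [at_J, h, hfJ])
    have := hf (lt_of_fixes_lt hne' fun b hb => by
      have := hbefore _ (hJ hb)
      rw [at_J, hfJ] at this
      exact (hf.injective this).symm)
    rw [at_J, hfJ] at hlt
    exact this.asymm hlt
  by_cases h2 : ∃ a, f a = p
  · obtain ⟨a, rfl⟩ := h2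
    have hne' : σ a ≠ a := fun h => hp (by rw [at_f, h, hJf])
    have := hJ (lt_of_fixes_lt hne' fun b hb => by
      have := hbefore _ (hf hb)
      rw [at_f, ← hJf] at this
      exact (J.injective this).symm)
    rw [at_f, ← hJf] at hlt
    exact this.asymm hlt
  · apply hp
    rw [Equiv.permCongr_apply, τsymm_fix _ h1, τfix]
    rintro ⟨a, ha⟩
    exact h2 ⟨a, by rw [← hfJ, ha, hπ.apply_apply]⟩

/-- The pairing tensors without long increasing subsequences span all pairing tensors. -/
lemma pairingTensor_mem_span {m : ℕ} (π : Equiv.Perm (Fin m)) (hπ : IsPairing π) :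
    pairingTensor l π ∈
      Submodule.span ℝ (pairingTensor l '' {π : Equiv.Perm (Fin m) | IsPairing π ∧ lisLE π l}) := by
  induction π using
    (InvImage.wf (fun π : Equiv.Perm (Fin m) => toLex ⇑π) wellFounded_gt).induction with
  | _ π ih =>
  by_cases hlis : lisLE π l
  · exact Submodule.subset_span ⟨π, ⟨hπ, hlis⟩, rfl⟩
  simp only [lisLE, not_forall, not_le] at hlis
  obtain ⟨d, f, hf, hJ, hd⟩ := hlis
  let J : Fin d ↪ Fin m := ⟨fun a => π (f a), hJ.injective⟩
  have hsum := sum_sign_mul_pairingTensor_eq_zero hd J π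
  rw [← Finset.add_sum_erase _ _ (Finset.mem_univ 1)] at hsum
  have hone : ((1 : Equiv.Perm (Fin d)).viaEmbedding J).permCongr π = π := by
    have : (1 : Equiv.Perm (Fin d)).viaEmbedding J = 1 := map_one (Equiv.Perm.viaEmbeddingHom J)
    rw [this]
    rfl
  rw [hone, Equiv.Perm.sign_one, Units.val_one, Int.cast_one, one_smul] at hsum
  rw [eq_neg_of_add_eq_zero_left hsum]
  refine Submodule.neg_mem _ (Submodule.sum_mem _ fun σ hσ => Submodule.smul_mem _ _ ?_)
  exact ih _ (lt_permCongr_viaEmbedding hπ hf (J := J) hJ (fun _ => rfl) (Finset.ne_of_mem_erase hσ))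
    (hπ.permCongr _)

/-- `S` indexes an increasing subsequence of `π` ending at `i`. -/
def IsChainTo {m : ℕ} (π : Equiv.Perm (Fin m)) (i : Fin m) (S : Finset (Fin m)) : Prop :=
  StrictMonoOn π S ∧ i ∈ S ∧ ∀ x ∈ S, x ≤ i

open Classical in
/-- The length of the longest increasing subsequence of `π` ending at `i`. -/
def chainHeight {m : ℕ} (π : Equiv.Perm (Fin m)) (i : Fin m) : ℕ :=
  (Finset.univ.filter (IsChainTo π i)).sup Finset.card

lemma IsChainTo.card_le {m : ℕ} {π : Equiv.Perm (Fin m)} {i : Fin m} {S : Finset (Fin m)}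
    (h : IsChainTo π i S) : S.card ≤ chainHeight π i := by
  classical
  exact Finset.le_sup (f := Finset.card) (Finset.mem_filter.2 ⟨Finset.mem_univ _, h⟩)

lemma isChainTo_singleton {m : ℕ} (π : Equiv.Perm (Fin m)) (i : Fin m) : IsChainTo π i {i} := by
  simp [IsChainTo]

lemma exists_isChainTo_card_eq {m : ℕ} (π : Equiv.Perm (Fin m)) (i : Fin m) :
    ∃ S, IsChainTo π i S ∧ chainHeight π i = S.card := by
  classical
  obtain ⟨S, hS, h⟩ := Finset.exists_mem_eq_sup (Finset.univ.filter (IsChainTo π i))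
    ⟨{i}, by simp [isChainTo_singleton]⟩ Finset.card
  exact ⟨S, (Finset.mem_filter.1 hS).2, h⟩

lemma chainHeight_pos {m : ℕ} (π : Equiv.Perm (Fin m)) (i : Fin m) : 0 < chainHeight π i := by
  simpa [Nat.succ_le_iff] using (isChainTo_singleton π i).card_le

lemma chainHeight_le {m : ℕ} {π : Equiv.Perm (Fin m)} (h : lisLE π l) (i : Fin m) :
    chainHeight π i ≤ l := by
  obtain ⟨S, hS, hcard⟩ := exists_isChainTo_card_eq π i
  rw [hcard]
  refine h S.card (S.orderEmbOfFin rfl) (S.orderEmbOfFin rfl).strictMono fun a b hab => ?_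
  exact hS.1 (S.orderEmbOfFin_mem rfl a) (S.orderEmbOfFin_mem rfl b)
    ((S.orderEmbOfFin rfl).strictMono hab)

lemma chainHeight_lt {m : ℕ} {π : Equiv.Perm (Fin m)} {i j : Fin m} (hij : i < j)
    (hπ : π i < π j) : chainHeight π i < chainHeight π j := by
  obtain ⟨S, ⟨hmono, hi, hle⟩, hcard⟩ := exists_isChainTo_card_eq π i
  have hj : j ∉ S := fun h => (hle j h).not_gt hij
  have hto : ∀ x ∈ S, π x < π j := fun x hx =>
    (hmono.monotoneOn hx hi (hle x hx)).trans_lt hπ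
  have hchain : IsChainTo π j (insert j S) := by
    refine ⟨?_, Finset.mem_insert_self _ _, ?_⟩
    · intro x hx y hy hxy
      rcases Finset.mem_insert.1 hx with rfl | hx' <;> rcases Finset.mem_insert.1 hy with rfl | hy'
      · exact absurd hxy (lt_irrefl _)
      · exact absurd (hxy.trans_le (hle y hy')) hij.asymm
      · exact hto x hx'
      · exact hmono hx' hy' hxy
    · intro x hx
      rcases Finset.mem_insert.1 hx with rfl | hx
      · exact le_rfl
      · exact (hle x hx).trans hij.le
  have := hchain.card_le
  rw [Finset.card_insert_of_notMem hj] at this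
  omega

lemma IsPairing.chainHeight_apply_le {m : ℕ} {π : Equiv.Perm (Fin m)} (h : IsPairing π)
    (i : Fin m) : chainHeight π i ≤ chainHeight π (π i) := by
  obtain ⟨S, ⟨hmono, hi, hle⟩, hcard⟩ := exists_isChainTo_card_eq π i
  have hchain : IsChainTo π (π i) (S.map π.toEmbedding) := by
    refine ⟨?_, Finset.mem_map_of_mem _ hi, ?_⟩
    · intro x hx y hy hxy
      obtain ⟨x, hx', rfl⟩ := Finset.mem_map.1 hx
      obtain ⟨y, hy', rfl⟩ := Finset.mem_map.1 hy
      simp only [Equiv.coe_toEmbedding, h.apply_apply] at hxy ⊢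
      exact (hmono.lt_iff_lt hx' hy').1 hxy
    · intro x hx
      obtain ⟨x, hx', rfl⟩ := Finset.mem_map.1 hx
      exact hmono.monotoneOn hx' hi (hle x hx')
  rw [hcard, ← Finset.card_map π.toEmbedding]
  exact hchain.card_le

/-- The letters of a pairing can be coloured so that paired letters share a colour and each colour
class is decreasing. -/
lemma IsPairing.exists_word {m : ℕ} {π : Equiv.Perm (Fin m)} (h : IsPairing π)
    (hlis : lisLE π l) :
    ∃ w : Fin m → Fin l, (∀ x, w (π x) = w x) ∧ ∀ i j, i < j → w i = w j → π j < π i := by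
  have hlt (i : Fin m) : chainHeight π i - 1 < l := by
    have := chainHeight_pos π i
    have := chainHeight_le hlis i
    omega
  refine ⟨fun i => ⟨chainHeight π i - 1, hlt i⟩, fun x => ?_, fun i j hij hw => ?_⟩
  · have h1 := h.chainHeight_apply_le x
    have h2 := h.chainHeight_apply_le (π x)
    rw [h.apply_apply] at h2
    exact Fin.ext (congrArg (· - 1) (le_antisymm h2 h1))
  · refine lt_of_le_of_ne (le_of_not_gt fun hπ => ?_) fun he => hij.ne' (π.injective he)
    have h1 := chainHeight_lt hij hπ
    have h2 := chainHeight_pos π i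
    have h3 : chainHeight π i - 1 = chainHeight π j - 1 := congrArg Fin.val hw
    omega

lemma toLex_le_of_pairingTensor_ne_zero {m : ℕ} {π ρ : Equiv.Perm (Fin m)} (hπ : IsPairing π)
    {w : Fin m → Fin l} (hw : ∀ x, w (π x) = w x)
    (hdec : ∀ i j, i < j → w i = w j → π j < π i) (hρ : pairingTensor l ρ w ≠ 0) :
    toLex ⇑ρ ≤ toLex ⇑π := by
  have hρw : ∀ x, w (ρ x) = w x := by
    by_contra h
    exact hρ (if_neg h)
  refine le_of_not_gt fun ⟨p, hbefore, hlt⟩ => ?_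
  change ∀ q < p, π q = ρ q at hbefore
  change π p < ρ p at hlt
  set q := π (ρ p) with hq
  have hπq : π q = ρ p := hπ.apply_apply _
  have hwq : w q = w p := by rw [hq, hw, hρw]
  rcases lt_trichotomy q p with h | h | h
  · have := hbefore q h
    rw [hπq] at this
    exact h.ne (ρ.injective this).symm
  · rw [h] at hπq
    exact hlt.ne hπq
  · have := hdec p q h hwq.symm
    rw [hπq] at this
    exact this.asymm hlt

lemma linearIndependent_pairingTensor (m l : ℕ) :
    LinearIndependent ℝ (fun π : {π : Equiv.Perm (Fin m) // IsPairing π ∧ lisLE π l} =>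
      pairingTensor l (π : Equiv.Perm (Fin m))) := by
  classical
  rw [Fintype.linearIndependent_iff]
  intro c hc
  by_contra! hne
  obtain ⟨π, hπ, hmin⟩ := WellFounded.has_min
    (InvImage.wf (fun π : {π : Equiv.Perm (Fin m) // IsPairing π ∧ lisLE π l} =>
      toLex ⇑(π : Equiv.Perm (Fin m))) wellFounded_lt) {π | c π ≠ 0} hne
  obtain ⟨w, hw, hdec⟩ := π.2.1.exists_word π.2.2
  have h := congrFun hc w
  simp only [Finset.sum_apply, Pi.smul_apply, smul_eq_mul, Pi.zero_apply] at h
  rw [Finset.sum_eq_single π] at h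
  · exact hπ (by simpa [pairingTensor, hw] using h)
  · intro ρ _ hρπ
    by_contra h0
    have hle := toLex_le_of_pairingTensor_ne_zero π.2.1 hw hdec (right_ne_zero_of_mul h0)
    refine hmin ρ (left_ne_zero_of_mul h0) (lt_of_le_of_ne hle fun he => hρπ ?_)
    exact Subtype.ext (DFunLike.coe_injective (toLex.injective he))
  · simp

lemma finrank_invariantTensors (m l : ℕ) :
    Module.finrank ℝ (invariantTensors (Fin m) l) =
      Nat.card {π : Equiv.Perm (Fin m) // IsPairing π ∧ lisLE π l} := by
  classical
  have hspan : invariantTensors (Fin m) l = Submodule.span ℝ (Set.range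
      fun π : {π : Equiv.Perm (Fin m) // IsPairing π ∧ lisLE π l} =>
        pairingTensor l (π : Equiv.Perm (Fin m))) := by
    rw [invariantTensors_eq_span]
    refine Eq.trans ?_ (congrArg (Submodule.span ℝ) (Set.image_eq_range (pairingTensor l)
      {π : Equiv.Perm (Fin m) | IsPairing π ∧ lisLE π l}))
    refine le_antisymm (Submodule.span_le.2 ?_) (Submodule.span_mono (Set.image_mono fun _ h => h.1))
    rintro _ ⟨π, hπ, rfl⟩
    exact pairingTensor_mem_span π hπ
  rw [hspan, finrank_span_eq_card (linearIndependent_pairingTensor m l), Nat.card_eq_fintype_card]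

end basis

/-- `f^O_{n,l} = E_{U ∈ O(l)} (Tr U)^{2n}`, where the expectation is taken with respect to
the (unique) Haar probability measure on the orthogonal group `O(l)`. -/
theorem fpfInvCount_eq_orthogonal_trace_moment (n l : ℕ)
    (μ : Measure (Matrix.orthogonalGroup (Fin l) ℝ))
    [μ.IsHaarMeasure] [IsProbabilityMeasure μ] :
    (fpfInvCount n l : ℝ) =
      ∫ U, (Matrix.trace (U : Matrix (Fin l) (Fin l) ℝ)) ^ (2 * n) ∂μ := by
  have h := integral_trace_pow_eq_finrank (ι := Fin (2 * n)) μ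
  rw [Fintype.card_fin] at h
  rw [h, finrank_invariantTensors, fpfInvCount]
  simp only [IsPairing, and_assoc]
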